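/- For all integers k ≥ ℓ ≥ 0 and all α, β ∈ ℤ, one has (k−ℓ)! · ℓ! · τ_{k,ℓ}^{(α,β)} = (−1)^{ℓ(ℓ+1)/2} Σ_{(m,n)} p.coeff(m,n) · ∏_{i=0}^{k−ℓ−1} c_{α−β+m(i)} · ∏_{j=0}^{ℓ−1} d_{α+n(j)}, where p ∈ ℂ[x_0,…,x_{k−ℓ−1}, y_0,…,y_{ℓ−1}] is the polynomial p = ∏_{0≤i<i'≤k−ℓ−1}(x_i − x_{i'})² · ∏_{0≤j<j'≤ℓ−1}(y_j − y_{j'})² · ∏_{i=0}^{k−ℓ−1} ∏_{j=0}^{ℓ−1}(x_i − y_j), the sum ranges over the (finite) support of p (pairs of exponent vectors m : Fin (k−ℓ) → ℕ, n : Fin ℓ → ℕ), and p.coeff(m,n) is the coefficient of the monomial ∏_i x_i^{m(i)} ∏_j y_j^{n(j)} in p. -/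

import Mathlib

/-- The `ĜL₃` tau-function (with `E(z) = 0`): `(−1)^{ℓ(ℓ+1)/2}` times the determinant of the
`k × k` matrix whose `(i,j)` entry is `d_{α+i+j}` for `0 ≤ j ≤ ℓ-1` and `c_{α−β+i+j−ℓ}` for
`ℓ ≤ j ≤ k-1`. -/
noncomputable def tau3 (c d : ℤ → ℂ) (k ℓ : ℕ) (α β : ℤ) : ℂ :=
  (-1 : ℂ) ^ (ℓ * (ℓ + 1) / 2) *
    Matrix.det (Matrix.of fun i j : Fin k =>
      if (j : ℕ) < ℓ then d (α + (i : ℕ) + (j : ℕ))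
      else c (α - β + (i : ℕ) + (j : ℕ) - (ℓ : ℤ)))

/-- The polynomial
`p = ∏_{i<i'}(x_i − x_{i'})² ⬝ ∏_{j<j'}(y_j − y_{j'})² ⬝ ∏_{i,j}(x_i − y_j)` in the variables
`x_0, …, x_{k-ℓ-1}` (indexed by `Sum.inl`) and `y_0, …, y_{ℓ-1}` (indexed by `Sum.inr`). -/
noncomputable def pKernel (k ℓ : ℕ) : MvPolynomial (Fin (k - ℓ) ⊕ Fin ℓ) ℂ :=
  (∏ p ∈ (Finset.univ : Finset (Fin (k - ℓ) × Fin (k - ℓ))).filter (fun p => p.1 < p.2),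
      (MvPolynomial.X (Sum.inl p.1) - MvPolynomial.X (Sum.inl p.2)) ^ 2) *
    (∏ p ∈ (Finset.univ : Finset (Fin ℓ × Fin ℓ)).filter (fun p => p.1 < p.2),
      (MvPolynomial.X (Sum.inr p.1) - MvPolynomial.X (Sum.inr p.2)) ^ 2) *
    ∏ i : Fin (k - ℓ), ∏ j : Fin ℓ,
      (MvPolynomial.X (Sum.inl i) - MvPolynomial.X (Sum.inr j))

open MvPolynomial Equiv Matrix

/-! Read `f t m` as the `m`-th moment of a variable `t`. The expectation functional `E`, which sends
`∏ X_t ^ m_t` to `∏ f t m_t`, turns the right-hand sum into `E p`. The polynomial `p` is the product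
of the Vandermonde determinants of the `x`'s, of the `y`'s and of all the variables jointly. Expand
the first two over permutations: since all `x`'s have the same moments, and likewise all `y`'s, and
the joint determinant is antisymmetric, each of the `n! ℓ!` terms has the same expectation as the
diagonal one. As a variable occurs in a single row of the joint Vandermonde matrix, the expectation
of the diagonal term is computed inside the determinant. -/

section MomentFunctional

variable {σ R : Type*} [Fintype σ] [CommSemiring R]

/-- The expectation functional on polynomials in independent variables, `f t m` being the `m`-th
moment of the variable `t`: it sends the monomial `∏ X_t ^ m_t` to `∏ f t m_t`. A multiple residue
against Laurent series is of this form, their coefficients being the moments. -/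
noncomputable def momentFunctional (f : σ → ℕ → R) : MvPolynomial σ R →ₗ[R] R :=
  (basisMonomials σ R).constr R fun m => ∏ t, f t (m t)

variable (f : σ → ℕ → R)

lemma momentFunctional_monomial (m : σ →₀ ℕ) (a : R) :
    momentFunctional f (monomial m a) = a * ∏ t, f t (m t) := by
  have hsmul : monomial m a = a • basisMonomials σ R m := by simp [smul_monomial]
  rw [hsmul, map_smul, momentFunctional, Module.Basis.constr_basis, smul_eq_mul]

lemma momentFunctional_eq_sum (p : MvPolynomial σ R) :
    momentFunctional f p = ∑ m ∈ p.support, p.coeff m * ∏ t, f t (m t) := by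
  conv_lhs => rw [p.as_sum, map_sum]
  simp only [momentFunctional_monomial]

lemma momentFunctional_prod_X_pow (a : σ → ℕ) :
    momentFunctional f (∏ t, X t ^ a t) = ∏ t, f t (a t) := by
  have hmonomial : (∏ t, X t ^ a t : MvPolynomial σ R) =
      monomial (Finsupp.equivFunOnFinite.symm a) 1 := by
    simp [monomial_eq, Finsupp.prod_fintype]
  simp [hmonomial, momentFunctional_monomial]

variable {f} in
lemma momentFunctional_rename {ρ : Perm σ} (hf : ∀ t, f (ρ t) = f t)
    (p : MvPolynomial σ R) : momentFunctional f (rename ρ p) = momentFunctional f p := by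
  induction p using MvPolynomial.induction_on' with
  | monomial m a =>
    rw [rename_monomial, momentFunctional_monomial, momentFunctional_monomial, ← Equiv.prod_comp ρ]
    simp only [hf, Finsupp.mapDomain_apply ρ.injective]
  | add p q hp hq => simp only [map_add, hp, hq]

end MomentFunctional

section VariableVandermonde

variable {σ : Type*} {N : ℕ}

/-- The Vandermonde determinant of all the variables, taken in the order given by `e`. -/
noncomputable def variableVandermonde (R : Type*) [CommRing R] (e : Fin N ≃ σ) :
    MvPolynomial σ R :=
  (vandermonde fun i => X (e i)).det

variable {R : Type*} [CommRing R] [Fintype σ] (e : Fin N ≃ σ)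

lemma rename_variableVandermonde [DecidableEq σ] (ρ : Perm σ) :
    rename ρ (variableVandermonde R e) = Perm.sign ρ • variableVandermonde R e := by
  have hperm : (rename ρ).mapMatrix (vandermonde fun i => (X (e i) : MvPolynomial σ R)) =
      (vandermonde fun i => X (e i)).submatrix (e.symm.permCongr ρ) id := by
    ext i j : 2
    simp [vandermonde]
  rw [variableVandermonde, AlgHom.map_det, hperm, det_permute, Perm.sign_permCongr,
    Units.smul_def, zsmul_eq_mul]

lemma momentFunctional_sign_smul_rename_mul_variableVandermonde [DecidableEq σ]
    {f : σ → ℕ → R} {ρ : Perm σ} (hf : ∀ t, f (ρ t) = f t) (p : MvPolynomial σ R) :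
    momentFunctional f ((Perm.sign ρ • rename ρ p) * variableVandermonde R e) =
      momentFunctional f (p * variableVandermonde R e) := by
  rw [smul_mul_assoc, ← mul_smul_comm, ← rename_variableVandermonde, ← map_mul,
    momentFunctional_rename hf]

lemma momentFunctional_prod_X_pow_mul_variableVandermonde (f : σ → ℕ → R) (a : σ → ℕ) :
    momentFunctional f ((∏ t, X t ^ a t) * variableVandermonde R e) =
      (of fun i j : Fin N => f (e j) (i + a (e j))).det := by
  rw [variableVandermonde, ← det_transpose, det_apply, det_apply, Finset.mul_sum, map_sum]
  refine Finset.sum_congr rfl fun π _ => ?_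
  have hmonomial : (∏ t, X t ^ a t) * ∏ j, (X (e j) : MvPolynomial σ R) ^ (π j : ℕ) =
      ∏ t, X t ^ ((π (e.symm t) : ℕ) + a t) := by
    simp only [← e.prod_comp, ← Finset.prod_mul_distrib, symm_apply_apply, pow_add, mul_comm]
  simp only [transpose_apply, vandermonde_apply, of_apply]
  rw [mul_smul_comm, hmonomial, Units.smul_def, Units.smul_def, map_zsmul,
    momentFunctional_prod_X_pow, ← e.prod_comp]
  simp only [symm_apply_apply]

end VariableVandermonde

section VandermondeProducts

variable {R : Type*} [CommRing R] {n ℓ : ℕ}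

lemma det_vandermonde_eq_prod_ite (v : Fin n → R) :
    (vandermonde v).det = ∏ i, ∏ j, if i < j then v j - v i else 1 := by
  simp only [det_vandermonde, ← Finset.prod_filter, Finset.filter_lt_eq_Ioi]

lemma prod_filter_lt_sub_sq (v : Fin n → R) :
    ∏ p : Fin n × Fin n with p.1 < p.2, (v p.1 - v p.2) ^ 2 = (vandermonde v).det ^ 2 := by
  rw [det_vandermonde_eq_prod_ite, ← Finset.prod_pow, Finset.prod_filter, Fintype.prod_prod_type]
  simp only [← Finset.prod_pow, ite_pow, one_pow, sub_sq_comm]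

lemma det_vandermonde_append (v : Fin ℓ → R) (w : Fin n → R) :
    (vandermonde (Fin.append v w)).det =
      (vandermonde v).det * (vandermonde w).det * ∏ i, ∏ j, (w i - v j) := by
  have castAdd_lt_natAdd (j : Fin ℓ) (i : Fin n) : j.castAdd n < i.natAdd ℓ := by
    simp only [Fin.lt_def, Fin.val_castAdd, Fin.val_natAdd]
    lia
  simp only [det_vandermonde_eq_prod_ite, Fin.prod_univ_add, Fin.append_left, Fin.append_right,
    castAdd_lt_natAdd, (castAdd_lt_natAdd _ _).not_gt, (Fin.strictMono_castAdd n).lt_iff_lt,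
    Fin.natAdd_lt_natAdd_iff, if_true, if_false, Finset.prod_const_one,
    Finset.prod_mul_distrib]
  rw [Finset.prod_comm (f := fun j i => w i - v j)]
  ring

end VandermondeProducts

section ResidueKernel

/-- The order `y_0, …, y_{ℓ-1}, x_0, …, x_{n-1}` of the variables. The `y`'s come first, as the
columns of the sequence `d` do in `tau3`. -/
def blockOrder (n ℓ : ℕ) : Fin (ℓ + n) ≃ Fin n ⊕ Fin ℓ :=
  finSumFinEquiv.symm.trans (sumComm _ _)

/-- The position of a variable inside its block: `i` for `x_i` and `j` for `y_j`. -/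
def blockOffset (n ℓ : ℕ) : Fin n ⊕ Fin ℓ → ℕ :=
  Sum.elim (fun i => i) (fun j => j)

/-- The polynomial `pKernel` over an arbitrary commutative ring, the sizes `n` and `ℓ` of the two
blocks of variables being independent. -/
noncomputable def residueKernel (R : Type*) [CommRing R] (n ℓ : ℕ) :
    MvPolynomial (Fin n ⊕ Fin ℓ) R :=
  (∏ p : Fin n × Fin n with p.1 < p.2, (X (Sum.inl p.1) - X (Sum.inl p.2)) ^ 2) *
    (∏ p : Fin ℓ × Fin ℓ with p.1 < p.2, (X (Sum.inr p.1) - X (Sum.inr p.2)) ^ 2) *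
    ∏ i : Fin n, ∏ j : Fin ℓ, (X (Sum.inl i) - X (Sum.inr j))

variable {R : Type*} [CommRing R] {n ℓ : ℕ}

lemma apply_blockOrder {α : Type*} (g : Fin n ⊕ Fin ℓ → α) (j : Fin (ℓ + n)) :
    g (blockOrder n ℓ j) = Fin.append (fun j => g (Sum.inr j)) (fun i => g (Sum.inl i)) j := by
  refine Fin.addCases (fun j => ?_) (fun i => ?_) j <;> simp [blockOrder]

lemma residueKernel_eq_mul_variableVandermonde :
    residueKernel R n ℓ =
      (vandermonde fun i : Fin n => X (Sum.inl i)).det *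
        (vandermonde fun j : Fin ℓ => X (Sum.inr j)).det *
        variableVandermonde R (blockOrder n ℓ) := by
  have hjoint : (fun i => (X (blockOrder n ℓ i) : MvPolynomial _ R)) =
      Fin.append (fun j => X (Sum.inr j)) (fun i => X (Sum.inl i)) :=
    funext (apply_blockOrder X)
  rw [variableVandermonde, hjoint, det_vandermonde_append, residueKernel,
    prod_filter_lt_sub_sq (fun i : Fin n => X (Sum.inl i)),
    prod_filter_lt_sub_sq (fun j : Fin ℓ => X (Sum.inr j))]
  ring

lemma det_vandermonde_inl_mul_det_vandermonde_inr_eq_sum :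
    (vandermonde fun i : Fin n => (X (Sum.inl i) : MvPolynomial (Fin n ⊕ Fin ℓ) R)).det *
        (vandermonde fun j : Fin ℓ => X (Sum.inr j)).det =
      ∑ ρ : Perm (Fin n) × Perm (Fin ℓ), Perm.sign (sumCongr ρ.1 ρ.2) •
        rename (sumCongr ρ.1 ρ.2) (∏ t, X t ^ blockOffset n ℓ t) := by
  rw [det_apply, det_apply, Finset.sum_mul_sum, Fintype.sum_prod_type]
  simp only [Perm.sign_sumCongr, smul_mul_smul_comm, Fintype.prod_sum_type, map_mul, map_prod,
    map_pow, rename_X, sumCongr_apply, Sum.map_inl, Sum.map_inr, vandermonde_apply, blockOffset,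
    Sum.elim_inl, Sum.elim_inr]

theorem momentFunctional_residueKernel (f : Fin n ⊕ Fin ℓ → ℕ → R)
    (hf : ∀ (ρ : Perm (Fin n) × Perm (Fin ℓ)) t, f (sumCongr ρ.1 ρ.2 t) = f t) :
    momentFunctional f (residueKernel R n ℓ) = (n.factorial * ℓ.factorial : R) *
      (of fun i j : Fin (ℓ + n) =>
        f (blockOrder n ℓ j) (i + blockOffset n ℓ (blockOrder n ℓ j))).det := by
  rw [residueKernel_eq_mul_variableVandermonde, det_vandermonde_inl_mul_det_vandermonde_inr_eq_sum,
    Finset.sum_mul, map_sum]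
  simp only [momentFunctional_sign_smul_rename_mul_variableVandermonde _ (hf _),
    momentFunctional_prod_X_pow_mul_variableVandermonde, Finset.sum_const, Finset.card_univ,
    Fintype.card_prod, Fintype.card_perm, Fintype.card_fin, nsmul_eq_mul, Nat.cast_mul]

end ResidueKernel

theorem residue_formula_tau3_general {R : Type*} [CommRing R] (c d : ℕ → R) (n ℓ : ℕ) :
    (n.factorial * ℓ.factorial : R) * (of fun i j : Fin (ℓ + n) =>
        Fin.append (fun j : Fin ℓ => d (i + j)) (fun j : Fin n => c (i + j)) j).det =
      ∑ m ∈ (residueKernel R n ℓ).support,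
        (residueKernel R n ℓ).coeff m *
          (∏ i : Fin n, c (m (Sum.inl i))) * ∏ j : Fin ℓ, d (m (Sum.inr j)) := by
  let f : Fin n ⊕ Fin ℓ → ℕ → R := Sum.elim (fun _ => c) (fun _ => d)
  have hf (ρ : Perm (Fin n) × Perm (Fin ℓ)) (t) : f (sumCongr ρ.1 ρ.2 t) = f t := by
    cases t <;> rfl
  have hentry (i j : Fin (ℓ + n)) :
      f (blockOrder n ℓ j) (i + blockOffset n ℓ (blockOrder n ℓ j)) =
        Fin.append (fun j : Fin ℓ => d (i + j)) (fun j : Fin n => c (i + j)) j :=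
    apply_blockOrder (fun t => f t (i + blockOffset n ℓ t)) j
  simp only [← hentry]
  rw [← momentFunctional_residueKernel f hf, momentFunctional_eq_sum]
  simp only [f, Fintype.prod_sum_type, Sum.elim_inl, Sum.elim_inr, mul_assoc]

lemma tau3_eq_det_append (c d : ℤ → ℂ) {k ℓ : ℕ} (hℓk : ℓ ≤ k) (α β : ℤ) :
    tau3 c d k ℓ α β = (-1) ^ (ℓ * (ℓ + 1) / 2) *
      (of fun i j : Fin (ℓ + (k - ℓ)) =>
        Fin.append (fun j : Fin ℓ => d (α + ↑(i + j : ℕ)))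
          (fun j : Fin (k - ℓ) => c (α - β + ↑(i + j : ℕ))) j).det := by
  rw [tau3, ← det_submatrix_equiv_self (finCongr (Nat.add_sub_of_le hℓk))]
  congr 2
  ext i j
  refine Fin.addCases (fun j => ?_) (fun j => ?_) j
  · simp [add_assoc]
  · simp only [submatrix_apply, of_apply, finCongr_apply, Fin.val_cast, Fin.val_natAdd,
      Fin.append_right]
    rw [if_neg (by lia)]
    congr 1
    push_cast
    ring

theorem residue_formula_tau3 (c d : ℤ → ℂ) (k ℓ : ℕ) (hℓk : ℓ ≤ k) (α β : ℤ) :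
    ((k - ℓ).factorial * ℓ.factorial : ℂ) * tau3 c d k ℓ α β =
      (-1 : ℂ) ^ (ℓ * (ℓ + 1) / 2) *
        ∑ m ∈ (pKernel k ℓ).support,
          (pKernel k ℓ).coeff m *
            (∏ i : Fin (k - ℓ), c (α - β + (m (Sum.inl i) : ℤ))) *
            (∏ j : Fin ℓ, d (α + (m (Sum.inr j) : ℤ))) := by
  rw [tau3_eq_det_append c d hℓk, mul_left_comm, residue_formula_tau3_general
    (fun m => c (α - β + m)) (fun m => d (α + m))]
  rfl
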